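/- For all x ≥ 0, the joint estimation penalty admits the closed form Δ(x) = 1/(1 − ρ(x)²) = 2·((3 + x)² + x²)/9 = (4x² + 12x + 18)/9; moreover Δ is strictly increasing on [0,∞) and satisfies Δ(x) ≥ 2 for all x ≥ 0, with equality exactly at x = 0 (i.e., the joint estimation penalty is always at least 3 dB and is minimized in the near-field limit). -/

import Mathlib

open Real Filter Set

/-- Fisher correlation coefficient as a function of the electrical distance `x = α·r`. -/
noncomputable def miRho (x : ℝ) : ℝ :=
  (3 + 2 * x) / Real.sqrt (2 * ((3 + x) ^ 2 + x ^ 2))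

/-- Joint estimation penalty `Δ(x) = 1/(1 − ρ(x)²)`. -/
noncomputable def miPenalty (x : ℝ) : ℝ := 1 / (1 - miRho x ^ 2)

-- The quotient is the cosine of the angle between `(u, v)` and `(1, 1)`, so its complement to `1`
-- measures the component `u - v` of `(u, v)` orthogonal to `(1, 1)`.
lemma one_sub_add_div_sqrt_sq {u v : ℝ} (huv : u ≠ v) :
    1 - ((u + v) / √(2 * (u ^ 2 + v ^ 2))) ^ 2 = (u - v) ^ 2 / (2 * (u ^ 2 + v ^ 2)) := by
  have parallelogram : 2 * (u ^ 2 + v ^ 2) = (u + v) ^ 2 + (u - v) ^ 2 := by ring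
  have norm_pos : 0 < 2 * (u ^ 2 + v ^ 2) := by
    rw [parallelogram]
    exact add_pos_of_nonneg_of_pos (sq_nonneg _) (sq_pos_of_ne_zero (sub_ne_zero.mpr huv))
  rw [div_pow, sq_sqrt norm_pos.le, one_sub_div norm_pos.ne', sub_eq_of_eq_add' parallelogram]

lemma miPenalty_eq (x : ℝ) : miPenalty x = 2 * ((3 + x) ^ 2 + x ^ 2) / 9 := by
  have one_sub_miRho_sq : 1 - miRho x ^ 2 = 9 / (2 * ((3 + x) ^ 2 + x ^ 2)) := by
    convert one_sub_add_div_sqrt_sq (u := 3 + x) (v := x) (by simp) using 2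
    · rw [miRho]
      ring
    · ring
  rw [miPenalty, one_sub_miRho_sq, one_div_div]

lemma miPenalty_eq_one_add_sq (x : ℝ) : miPenalty x = 1 + ((2 * x + 3) / 3) ^ 2 := by
  rw [miPenalty_eq]
  ring

lemma miPenalty_zero : miPenalty 0 = 2 := by
  norm_num [miPenalty_eq]

lemma strictMonoOn_miPenalty : StrictMonoOn miPenalty (Ici (-3 / 2)) := by
  intro x hx y _ hxy
  have base_nonneg : 0 ≤ (2 * x + 3) / 3 := by linarith [mem_Ici.mp hx]
  rw [miPenalty_eq_one_add_sq, miPenalty_eq_one_add_sq]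
  gcongr

theorem stmt_15_general :
    (∀ x : ℝ,
      miPenalty x = 2 * ((3 + x) ^ 2 + x ^ 2) / 9 ∧
      miPenalty x = (4 * x ^ 2 + 12 * x + 18) / 9) ∧
    StrictMonoOn miPenalty (Ici (-3 / 2)) ∧
    (∀ x : ℝ, -3 / 2 ≤ x → (2 ≤ miPenalty x ↔ 0 ≤ x)) ∧
    (∀ x : ℝ, -3 / 2 ≤ x → (miPenalty x = 2 ↔ x = 0)) := by
  have zero_mem : (0 : ℝ) ∈ Ici (-3 / 2) := by norm_num
  refine ⟨fun x => ⟨miPenalty_eq x, ?_⟩, strictMonoOn_miPenalty, fun x hx => ?_, fun x hx => ?_⟩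
  · rw [miPenalty_eq]
    ring
  · rw [← miPenalty_zero]
    exact strictMonoOn_miPenalty.le_iff_le zero_mem hx
  · rw [← miPenalty_zero]
    exact strictMonoOn_miPenalty.injOn.eq_iff hx zero_mem

/-- Closed form of the joint estimation penalty, its strict monotonicity on `[0,∞)`,
the `3 dB` lower bound `Δ(x) ≥ 2`, and equality exactly at `x = 0`. -/
theorem stmt_15 :
    (∀ x : ℝ, 0 ≤ x →
      miPenalty x = 2 * ((3 + x) ^ 2 + x ^ 2) / 9 ∧
      miPenalty x = (4 * x ^ 2 + 12 * x + 18) / 9) ∧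
    StrictMonoOn miPenalty (Set.Ici 0) ∧
    (∀ x : ℝ, 0 ≤ x → 2 ≤ miPenalty x) ∧
    (∀ x : ℝ, 0 ≤ x → (miPenalty x = 2 ↔ x = 0)) := by
  obtain ⟨closed_form, strict_mono, two_le_iff, eq_two_iff⟩ := stmt_15_general
  exact ⟨fun x _ => closed_form x, strict_mono.mono (Ici_subset_Ici.mpr (by norm_num)),
    fun x hx => (two_le_iff x (by linarith)).mpr hx, fun x hx => eq_two_iff x (by linarith)⟩
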